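/- Let V = V₀ + V₁ where V₀ ∈ L^∞(ℝ) with ess inf V₀ > 0 and V₁ ∈ L¹(ℝ), and let u_a ∈ K_a satisfy I(u_a;V) = min{ I(u;V) : u ∈ K_a }. Then u_a(x) > 0 for all x ∈ ℝ, and, setting J := { x ∈ ℝ : u_a(x) < 1 }, one has u_a ∈ W^{2,1}(J) and u_a″(x) = V(x) u_a(x) for almost every x ∈ J. -/

import Mathlib

open MeasureTheory Filter Real Topology

/-- The supremum norm `‖u‖_∞` of a (bounded continuous) function `u : ℝ → ℝ`. -/
noncomputable def supNorm (u : ℝ → ℝ) : ℝ := ⨆ x : ℝ, |u x|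

/-- `u` is (the continuous representative of) an element of `H¹(ℝ)`:
`u` is continuous, `u ∈ L²(ℝ)`, and there is a weak derivative `u' ∈ L²(ℝ)`,
i.e. `u x = u 0 + ∫_0^x u'`. -/
def IsH1 (u : ℝ → ℝ) : Prop :=
  Continuous u ∧ MemLp u 2 (volume : Measure ℝ) ∧
    ∃ u' : ℝ → ℝ, MemLp u' 2 (volume : Measure ℝ) ∧
      ∀ x : ℝ, u x = u 0 + ∫ t in (0:ℝ)..x, u' t

/-- The Dirichlet energy `∫_ℝ |u'(x)|² dx`.  (For `u ∈ H¹(ℝ)` the classical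
derivative `deriv u` exists a.e. and coincides a.e. with the weak derivative.) -/
noncomputable def energy (u : ℝ → ℝ) : ℝ := ∫ x : ℝ, (deriv u x) ^ 2

/-- `I(u;V) = ∫_ℝ (|u'(x)|² + V(x)|u(x)|²) dx` for a potential `V : ℝ → ℝ`. -/
noncomputable def IV (V : ℝ → ℝ) (u : ℝ → ℝ) : ℝ :=
  ∫ x : ℝ, ((deriv u x) ^ 2 + V x * (u x) ^ 2)

/-- Membership in `K_a = { u ∈ H¹(ℝ) ; u(a) = ‖u‖_∞ = 1 }`. -/
def InKa (a : ℝ) (u : ℝ → ℝ) : Prop := IsH1 u ∧ u a = 1 ∧ supNorm u = 1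

/-- `F(a;V) = inf { I(u;V) ; u ∈ K_a }`. -/
noncomputable def FV (V : ℝ → ℝ) (a : ℝ) : ℝ :=
  sInf {r : ℝ | ∃ u : ℝ → ℝ, InKa a u ∧ r = IV V u}

/-- `m(V) = inf { I(u;V)/‖u‖_∞² ; u ∈ H¹(ℝ), u ≢ 0 }`. -/
noncomputable def mV (V : ℝ → ℝ) : ℝ :=
  sInf {r : ℝ | ∃ u : ℝ → ℝ, IsH1 u ∧ u ≠ 0 ∧ r = IV V u / (supNorm u) ^ 2}

/-! Since `|u|` lies in `K_a` with no larger energy than `u`, it is a minimizer whenever `u` is.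
Perturbing a minimizer by test functions supported in the open set `{|u| < 1}` keeps it in `K_a`,
so the first variation vanishes there and du Bois-Reymond's lemma gives `u'' = V u` on that set.
A zero of the minimizer `|u|` is a minimum, hence a zero of `|u|'` too; by uniqueness for the linear
ODE, the zero set is open, hence empty because `u(a) = 1`. As `u` tends to `0` at infinity, the
equation holds near `±∞`. Integrating `u'' - V₁ u = V₀ u ≥ (ess inf V₀) u` over `[R, X]`, with `X`
running along a sequence on which `u'` stays bounded, shows `u ∈ L¹`; and `q = u' + u`, which
satisfies `|q|' ≥ |q| - |V u - u|`, is integrable in the same way, so `u' ∈ L¹`. -/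

open Set

section RealAnalysis

variable {f g : ℝ → ℝ} {a b : ℝ}

lemma intervalIntegrable_of_locallyIntegrable {E : Type*} [NormedAddCommGroup E] {f : ℝ → E}
    {μ : Measure ℝ} (hf : LocallyIntegrable f μ) (x y : ℝ) : IntervalIntegrable f μ x y :=
  intervalIntegrable_iff.mpr <|
    (hf.integrableOn_isCompact isCompact_uIcc).mono_set uIoc_subset_uIcc

lemma absolutelyContinuousOnInterval_abs (hf : AbsolutelyContinuousOnInterval f a b) :
    AbsolutelyContinuousOnInterval (fun x => |f x|) a b :=
  squeeze_zero (fun _ => Finset.sum_nonneg fun _ _ => dist_nonneg)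
    (fun _ => Finset.sum_le_sum fun _ _ => abs_abs_sub_abs_le _ _) hf

lemma absolutelyContinuousOnInterval_const_add
    (hf : AbsolutelyContinuousOnInterval f a b) (k : ℝ) :
    AbsolutelyContinuousOnInterval (fun x => k + f x) a b :=
  (LipschitzWith.const (α := ℝ) k).lipschitzOnWith.absolutelyContinuousOnInterval.fun_add hf

lemma absolutelyContinuousOnInterval_integral (hf : LocallyIntegrable f) (c a b : ℝ) :
    AbsolutelyContinuousOnInterval (fun x => ∫ t in c..x, f t) a b := by
  refine ((intervalIntegrable_of_locallyIntegrable hf (min a (min b c))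
    (max a (max b c))).absolutelyContinuousOnInterval_intervalIntegral ?_).mono
    (uIcc_subset_uIcc ?_ ?_) <;> simp

lemma ae_differentiableAt_of_absolutelyContinuous
    (hf : ∀ a b, AbsolutelyContinuousOnInterval f a b) : ∀ᵐ x, DifferentiableAt ℝ f x := by
  have h : ∀ᵐ x, ∀ n : ℕ, x ∈ uIcc (-(n : ℝ)) n → DifferentiableAt ℝ f x :=
    ae_all_iff.2 fun n => (hf _ _).ae_differentiableAt
  filter_upwards [h] with x hx
  obtain ⟨n, hn⟩ := exists_nat_ge |x|
  exact hx n (mem_uIcc.2 (.inl (abs_le.1 hn)))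

lemma deriv_eq_of_eq_const_add_integral {c k : ℝ} (hg : LocallyIntegrable g)
    (h : ∀ x, f x = k + ∫ t in c..x, g t) : deriv f =ᵐ[volume] g := by
  filter_upwards [_root_.LocallyIntegrable.ae_hasDerivAt_integral hg] with x hx
  simpa only [← funext h] using ((hx c).const_add k).deriv

lemma deriv_abs_comp {x : ℝ} (hf : DifferentiableAt ℝ f x) :
    deriv (fun y => |f y|) x = SignType.sign (f x) * deriv f x := by
  by_cases h₀ : f x = 0
  · have hmin : IsLocalMin (fun y => |f y|) x := .of_forall fun y => by simp [h₀]
    simp [hmin.deriv_eq_zero, h₀]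
  · exact ((hasDerivAt_abs h₀).comp x hf.hasDerivAt).deriv

lemma abs_sign_mul_le (x y : ℝ) : |(SignType.sign x : ℝ) * y| ≤ |y| := by
  rcases lt_trichotomy x 0 with h | h | h <;> simp [h]

lemma continuous_of_absolutelyContinuous (hf : ∀ a b, AbsolutelyContinuousOnInterval f a b) :
    Continuous f :=
  continuous_iff_continuousAt.2 fun x => (hf (x - 1) (x + 1)).continuousOn.continuousAt <| by
    rw [uIcc_of_le (by linarith)]
    exact Icc_mem_nhds (by linarith) (by linarith)

lemma frequently_abs_deriv_le {R C : ℝ} (hd : ∀ x, R ≤ x → DifferentiableAt ℝ f x)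
    (hC : ∀ x, R ≤ x → |f x| ≤ C) : ∃ᶠ x in atTop, |deriv f x| ≤ 2 * C := by
  refine frequently_atTop.2 fun a => ?_
  set b := max a R
  have hb : R ≤ b := le_max_right _ _
  obtain ⟨x, hx, hslope⟩ := exists_deriv_eq_slope f (lt_add_one b)
    (fun y hy => (hd y (hb.trans hy.1)).continuousAt.continuousWithinAt)
    (fun y hy => (hd y (hb.trans hy.1.le)).differentiableWithinAt)
  refine ⟨x, (le_max_left _ _).trans hx.1.le, ?_⟩
  calc |deriv f x| = |f (b + 1) - f b| := by rw [hslope]; simp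
    _ ≤ |f (b + 1)| + |f b| := abs_sub _ _
    _ ≤ 2 * C := by linarith [hC (b + 1) (by linarith), hC b hb]

lemma integrableOn_Ioi_of_frequently_integral_norm_le {E : Type*} [NormedAddCommGroup E]
    {f : ℝ → E} {μ : Measure ℝ} {R B : ℝ} (hf : ∀ X, R ≤ X → IntervalIntegrable f μ R X)
    (hB : ∃ᶠ X in atTop, ∫ x in R..X, ‖f x‖ ∂μ ≤ B) : IntegrableOn f (Ioi R) μ := by
  have hfX (X : ℝ) : IntegrableOn f (Ioc R X) μ := by
    rcases le_total R X with hX | hX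
    · exact (hf X hX).1
    · simp [Ioc_eq_empty hX.not_gt]
  have : (atTop ⊓ 𝓟 {X | ∫ x in R..X, ‖f x‖ ∂μ ≤ B}).NeBot := frequently_iff_neBot.1 hB
  exact integrableOn_Ioi_of_intervalIntegral_norm_bounded (b := id)
    (l := atTop ⊓ 𝓟 {X | ∫ x in R..X, ‖f x‖ ∂μ ≤ B}) B R hfX (tendsto_id.mono_left inf_le_left)
    (eventually_inf_principal.2 (.of_forall fun _ hX => hX))

lemma integrable_of_integrableOn_Ioi_of_comp_neg {E : Type*} [NormedAddCommGroup E] {f : ℝ → E}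
    {R : ℝ} (hf : LocallyIntegrable f) (hpos : IntegrableOn f (Ioi R))
    (hneg : IntegrableOn (fun x => f (-x)) (Ioi R)) : Integrable f := by
  have hneg' : IntegrableOn f (Iio (-R)) := by
    have h := (Measure.measurePreserving_neg (volume : Measure ℝ)).integrableOn_comp_preimage
      (Homeomorph.neg ℝ).measurableEmbedding (f := f) (s := Iio (-R))
    rw [← h]
    simpa [Function.comp_def] using hneg
  exact integrable_iff_integrableAtFilter_atBot_atTop.2
    ⟨⟨⟨_, Iio_mem_atBot _, hneg'⟩, ⟨_, Ioi_mem_atTop _, hpos⟩⟩, hf⟩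

lemma tendsto_cocompact_zero_of_integrable_deriv
    (hac : ∀ a b, AbsolutelyContinuousOnInterval f a b) (hf : Integrable f)
    (hf' : Integrable (deriv f)) : Tendsto f (cocompact ℝ) (𝓝 0) := by
  have hprim : (fun x => f 0 + ∫ t in (0 : ℝ)..x, deriv f t) = f :=
    funext fun x => by rw [(hac 0 x).integral_deriv_eq_sub]; ring
  have htop := (intervalIntegral_tendsto_integral_Ioi 0 hf'.integrableOn tendsto_id).const_add (f 0)
  have hbot := (intervalIntegral_tendsto_integral_Iic 0 hf'.integrableOn tendsto_id).const_sub (f 0)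
  simp only [id, hprim] at htop
  simp only [id, sub_eq_add_neg, ← intervalIntegral.integral_symm, hprim] at hbot
  rw [cocompact_eq_atBot_atTop, tendsto_sup]
  have hzero {l : Filter ℝ} {L : ℝ} (hl : ∀ s ∈ l, volume s = ⊤) (h : Tendsto f l (𝓝 L)) :
      Tendsto f l (𝓝 0) :=
    (hf.integrableAtFilter l).eq_zero_of_tendsto hl h ▸ h
  refine ⟨hzero (fun s hs => ?_) hbot, hzero (fun s hs => ?_) htop⟩
  · obtain ⟨b, hb⟩ := mem_atBot_sets.1 hs
    exact top_le_iff.1 (volume_Iic (a := b) ▸ measure_mono hb)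
  · obtain ⟨b, hb⟩ := mem_atTop_sets.1 hs
    exact top_le_iff.1 (volume_Ici (a := b) ▸ measure_mono hb)

lemma intervalIntegral_abs_le_integral_Ioi {R X : ℝ} (hf : IntegrableOn f (Ioi R))
    (hRX : R ≤ X) : ∫ x in R..X, |f x| ≤ ∫ x in Ioi R, |f x| := by
  rw [intervalIntegral.integral_of_le hRX]
  exact setIntegral_mono_set hf.abs (.of_forall fun _ => abs_nonneg _)
    Ioc_subset_Ioi_self.eventuallyLE

-- `q' = q + f` forces `|q|' ≥ |q| - |f|`.
lemma integral_abs_le_of_eq_integral_self_add {q : ℝ → ℝ} (hab : a ≤ b)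
    (hq : IntervalIntegrable q volume a b) (hf : IntervalIntegrable f volume a b)
    (hqf : ∀ x ∈ Icc a b, q x = q a + ∫ t in a..x, (q t + f t)) :
    ∫ x in a..b, |q x| ≤ |q b| + ∫ x in a..b, |f x| := by
  let Q : ℝ → ℝ := fun x => q a + ∫ t in a..x, (q t + f t)
  have hQ : AbsolutelyContinuousOnInterval Q a b := absolutelyContinuousOnInterval_const_add
    ((hq.add hf).absolutelyContinuousOnInterval_intervalIntegral left_mem_uIcc) (q a)
  have hQac : AbsolutelyContinuousOnInterval (fun x => |Q x|) a b :=
    absolutelyContinuousOnInterval_abs hQ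
  have hgrowth : ∀ᵐ x, x ∈ Icc a b → |q x| - |f x| ≤ deriv (fun y => |Q y|) x := by
    filter_upwards [(hq.add hf).ae_hasDerivAt_integral] with x hx hxab
    have hQ' : HasDerivAt Q (q x + f x) x :=
      (hx (Icc_subset_uIcc hxab) a left_mem_uIcc).const_add (q a)
    have hQx : Q x = q x := (hqf x hxab).symm
    rw [deriv_abs_comp hQ'.differentiableAt, hQ'.deriv, hQx, mul_add, sign_mul_self]
    linarith [neg_le_of_abs_le (abs_sign_mul_le (q x) (f x))]
  have hmono : ∫ x in a..b, (|q x| - |f x|) ≤ ∫ x in a..b, deriv (fun y => |Q y|) x :=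
    intervalIntegral.integral_mono_ae_restrict hab (hq.abs.sub hf.abs)
      hQac.intervalIntegrable_deriv ((ae_restrict_iff' measurableSet_Icc).2 hgrowth)
  have hQb : Q b = q b := (hqf b (right_mem_Icc.2 hab)).symm
  rw [intervalIntegral.integral_sub hq.abs hf.abs, hQac.integral_deriv_eq_sub, hQb] at hmono
  linarith [abs_nonneg (Q a)]

lemma integrableOn_Ioi_of_eq_integral_self_add {q : ℝ → ℝ} {R C : ℝ}
    (hq : ∀ X, R ≤ X → IntervalIntegrable q volume R X) (hf : IntegrableOn f (Ioi R))
    (hqf : ∀ X, R ≤ X → q X = q R + ∫ t in R..X, (q t + f t))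
    (hC : ∃ᶠ X in atTop, |q X| ≤ C) : IntegrableOn q (Ioi R) := by
  refine integrableOn_Ioi_of_frequently_integral_norm_le (B := C + ∫ t in Ioi R, |f t|) hq ?_
  refine (hC.and_eventually (eventually_ge_atTop R)).mono fun X ⟨hqX, hRX⟩ => ?_
  have hle := integral_abs_le_of_eq_integral_self_add hRX
    (hq X hRX)
    ((intervalIntegrable_iff_integrableOn_Ioc_of_le hRX).2 (hf.mono_set Ioc_subset_Ioi_self))
    fun x hx => hqf x hx.1
  simp only [Real.norm_eq_abs]
  linarith [hqX, intervalIntegral_abs_le_integral_Ioi hf hRX]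

lemma exists_uIcc_subset_Ioo_Icc_subset {s : Set ℝ} (hs : IsOpen s) {x y : ℝ}
    (hxy : uIcc x y ⊆ s) : ∃ α β, uIcc x y ⊆ Ioo α β ∧ Icc α β ⊆ s := by
  have hmin : min x y ∈ s := hxy (left_mem_Icc.2 min_le_max)
  have hmax : max x y ∈ s := hxy (right_mem_Icc.2 min_le_max)
  obtain ⟨α, hα, hαs⟩ :=
    mem_nhdsLE_iff_exists_Icc_subset.1 (mem_nhdsWithin_of_mem_nhds (hs.mem_nhds hmin))
  obtain ⟨β, hβ, hβs⟩ :=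
    mem_nhdsGE_iff_exists_Icc_subset.1 (mem_nhdsWithin_of_mem_nhds (hs.mem_nhds hmax))
  refine ⟨α, β, Icc_subset_Ioo hα hβ, ?_⟩
  rw [← Icc_union_Icc_eq_Icc hα.le (min_le_max.trans hβ.le),
    ← Icc_union_Icc_eq_Icc min_le_max hβ.le]
  exact union_subset hαs (union_subset hxy hβs)

lemma ae_essInf_le_of_memLp_top {α : Type*} [MeasurableSpace α] {μ : Measure α} {f : α → ℝ}
    (hf : MemLp f ⊤ μ) : ∀ᵐ x ∂μ, essInf f μ ≤ f x := by
  refine ae_essInf_le ⟨-(eLpNormEssSup f μ).toReal, eventually_map.2 ?_⟩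
  have hfin : eLpNormEssSup f μ ≠ ⊤ := by simpa using hf.2.ne
  filter_upwards [ae_le_eLpNormEssSup (f := f) (μ := μ)] with x hx
  exact neg_le_of_abs_le (by simpa using ENNReal.toReal_mono hfin hx)

end RealAnalysis

namespace IsH1

variable {u f : ℝ → ℝ}

lemma absolutelyContinuousOnInterval (hu : IsH1 u) (a b : ℝ) :
    AbsolutelyContinuousOnInterval u a b := by
  obtain ⟨-, -, u', hu', hprim⟩ := hu
  rw [funext hprim]
  exact absolutelyContinuousOnInterval_const_add
    (absolutelyContinuousOnInterval_integral (hu'.locallyIntegrable one_le_two) 0 a b) _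

lemma ae_differentiableAt (hu : IsH1 u) : ∀ᵐ x, DifferentiableAt ℝ u x :=
  ae_differentiableAt_of_absolutelyContinuous hu.absolutelyContinuousOnInterval

lemma memLp_deriv (hu : IsH1 u) : MemLp (deriv u) 2 := by
  obtain ⟨-, -, u', hu', hprim⟩ := hu
  exact (memLp_congr_ae
    (deriv_eq_of_eq_const_add_integral (hu'.locallyIntegrable one_le_two) hprim)).2 hu'

lemma eq_add_integral_deriv (hu : IsH1 u) (x y : ℝ) : u y = u x + ∫ t in x..y, deriv u t := by
  rw [(hu.absolutelyContinuousOnInterval x y).integral_deriv_eq_sub, add_sub_cancel]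

lemma of_absolutelyContinuous (hu : MemLp u 2) (hu' : MemLp (deriv u) 2)
    (hac : ∀ a b, AbsolutelyContinuousOnInterval u a b) : IsH1 u :=
  ⟨continuous_of_absolutelyContinuous hac, hu, deriv u, hu',
    fun x => by rw [(hac 0 x).integral_deriv_eq_sub, add_sub_cancel]⟩

lemma abs_deriv_abs_le (hu : IsH1 u) : ∀ᵐ x, |deriv (fun y => |u y|) x| ≤ |deriv u x| := by
  filter_upwards [hu.ae_differentiableAt] with x hx
  exact deriv_abs_comp hx ▸ abs_sign_mul_le _ _

lemma abs (hu : IsH1 u) : IsH1 (fun x => |u x|) :=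
  of_absolutelyContinuous hu.2.1.abs
    (hu.memLp_deriv.mono (measurable_deriv _).aestronglyMeasurable hu.abs_deriv_abs_le)
    fun a b => absolutelyContinuousOnInterval_abs (hu.absolutelyContinuousOnInterval a b)

lemma deriv_add_const_mul (hu : IsH1 u) (hf : IsH1 f) (t : ℝ) :
    deriv (fun x => u x + t * f x) =ᵐ[volume] fun x => deriv u x + t * deriv f x := by
  filter_upwards [hu.ae_differentiableAt, hf.ae_differentiableAt] with x hux hfx
  exact (hux.hasDerivAt.add (hfx.hasDerivAt.const_mul t)).deriv

lemma add_const_mul (hu : IsH1 u) (hf : IsH1 f) (t : ℝ) : IsH1 (fun x => u x + t * f x) :=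
  of_absolutelyContinuous (hu.2.1.add (hf.2.1.const_mul t))
    ((memLp_congr_ae (hu.deriv_add_const_mul hf t)).2
      (hu.memLp_deriv.add (hf.memLp_deriv.const_mul t)))
    fun a b => (hu.absolutelyContinuousOnInterval a b).fun_add
      ((hf.absolutelyContinuousOnInterval a b).const_mul t)

lemma tendsto_cocompact (hu : IsH1 u) : Tendsto u (cocompact ℝ) (𝓝 0) := by
  have hderiv : deriv (u * u) =ᵐ[volume] fun x => 2 * (u x * deriv u x) := by
    filter_upwards [hu.ae_differentiableAt] with x hx
    rw [(hx.hasDerivAt.mul hx.hasDerivAt).deriv]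
    ring
  have hsq : Tendsto (u * u) (cocompact ℝ) (𝓝 0) := tendsto_cocompact_zero_of_integrable_deriv
    (fun a b => (hu.absolutelyContinuousOnInterval a b).mul (hu.absolutelyContinuousOnInterval a b))
    (hu.2.1.integrable_mul hu.2.1)
    ((integrable_congr hderiv).2 ((hu.2.1.integrable_mul hu.memLp_deriv).const_mul 2))
  refine tendsto_zero_iff_abs_tendsto_zero _ |>.2 ?_
  simpa [Function.comp_def, Real.sqrt_mul_self_eq_abs] using hsq.sqrt

lemma exists_abs_le (hu : IsH1 u) : ∃ C, ∀ x, |u x| ≤ C := by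
  let v : ZeroAtInftyContinuousMap ℝ ℝ := ⟨⟨u, hu.1⟩, hu.tendsto_cocompact⟩
  obtain ⟨C, hC⟩ := isBounded_iff_forall_norm_le.1 v.isBounded_range
  exact ⟨C, fun x => hC _ (mem_range_self x)⟩

end IsH1

/-- Potentials of class `L^∞(ℝ) + L¹(ℝ)`, on which the energy `IV` is finite over `H¹(ℝ)`. -/
def IsLinftyAddL1 (V : ℝ → ℝ) : Prop :=
  ∃ V₀ V₁ : ℝ → ℝ, MemLp V₀ ⊤ ∧ Integrable V₁ ∧ V = fun x => V₀ x + V₁ x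

/-- The polar form of the quadratic form `IV V`, i.e. half its first variation at `u` in the
direction `f`. -/
noncomputable def polarIV (V u f : ℝ → ℝ) : ℝ :=
  ∫ x, (deriv u x * deriv f x + V x * (u x * f x))

namespace IsLinftyAddL1

variable {V u f : ℝ → ℝ}

lemma locallyIntegrable (hV : IsLinftyAddL1 V) : LocallyIntegrable V := by
  obtain ⟨V₀, V₁, hV₀, hV₁, rfl⟩ := hV
  exact (hV₀.locallyIntegrable le_top).add hV₁.locallyIntegrable

lemma comp_neg (hV : IsLinftyAddL1 V) : IsLinftyAddL1 fun x => V (-x) := by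
  obtain ⟨V₀, V₁, hV₀, hV₁, rfl⟩ := hV
  exact ⟨_, _, hV₀.comp_measurePreserving (Measure.measurePreserving_neg volume), hV₁.comp_neg, rfl⟩

lemma integrable_mul {C : ℝ} (hV : IsLinftyAddL1 V) (hf : Integrable f) (hC : ∀ x, |f x| ≤ C) :
    Integrable fun x => V x * f x := by
  obtain ⟨V₀, V₁, hV₀, hV₁, rfl⟩ := hV
  have h₀ : Integrable fun x => V₀ x * f x :=
    memLp_one_iff_integrable.1 ((memLp_one_iff_integrable.2 hf).mul hV₀)
  have h₁ : Integrable fun x => V₁ x * f x := hV₁.mul_bdd hf.1 (.of_forall hC)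
  simpa only [add_mul] using h₀.fun_add h₁

lemma integrable_mul_mul (hV : IsLinftyAddL1 V) (hu : IsH1 u) (hf : IsH1 f) :
    Integrable fun x => V x * (u x * f x) := by
  obtain ⟨C, hC⟩ := hu.exists_abs_le
  obtain ⟨D, hD⟩ := hf.exists_abs_le
  refine hV.integrable_mul (C := C * D) (hu.2.1.integrable_mul hf.2.1) fun x => ?_
  rw [abs_mul]
  exact mul_le_mul (hC x) (hD x) (abs_nonneg _) ((abs_nonneg _).trans (hC x))

lemma integrable_polarIV (hV : IsLinftyAddL1 V) (hu : IsH1 u) (hf : IsH1 f) :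
    Integrable fun x => deriv u x * deriv f x + V x * (u x * f x) :=
  (hu.memLp_deriv.integrable_mul hf.memLp_deriv).add (hV.integrable_mul_mul hu hf)

lemma integrable_IV (hV : IsLinftyAddL1 V) (hu : IsH1 u) :
    Integrable fun x => deriv u x ^ 2 + V x * u x ^ 2 := by
  simpa only [sq] using hV.integrable_polarIV hu hu

lemma IV_add_const_mul (hV : IsLinftyAddL1 V) (hu : IsH1 u) (hf : IsH1 f) (t : ℝ) :
    IV V (fun x => u x + t * f x) = IV V u + 2 * t * polarIV V u f + t ^ 2 * IV V f := by
  have hIu := hV.integrable_IV hu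
  have hIf := (hV.integrable_IV hf).const_mul (t ^ 2)
  have hIuf := (hV.integrable_polarIV hu hf).const_mul (2 * t)
  rw [IV, IV, IV, polarIV, ← integral_const_mul, ← integral_const_mul, ← integral_add hIu hIuf,
    ← integral_add (hIu.fun_add hIuf) hIf]
  refine integral_congr_ae ?_
  filter_upwards [hu.deriv_add_const_mul hf t] with x hx
  simp only [hx]
  ring

lemma IV_abs_le (hV : IsLinftyAddL1 V) (hu : IsH1 u) : IV V (fun x => |u x|) ≤ IV V u := by
  refine integral_mono_ae (hV.integrable_IV hu.abs) (hV.integrable_IV hu) ?_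
  filter_upwards [hu.abs_deriv_abs_le] with x hx
  simpa only [sq_abs, add_le_add_iff_right] using sq_le_sq.2 hx

end IsLinftyAddL1

namespace InKa

variable {a : ℝ} {u f : ℝ → ℝ}

lemma abs_le_one (hu : InKa a u) (x : ℝ) : |u x| ≤ 1 := by
  obtain ⟨-, -, hsup⟩ := hu
  have hbdd : BddAbove (range fun x => |u x|) := by
    by_contra hbdd
    rw [supNorm, Real.iSup_of_not_bddAbove hbdd] at hsup
    exact zero_ne_one hsup
  exact hsup ▸ le_ciSup hbdd x

lemma of_abs_le_one (hu : IsH1 u) (ha : u a = 1) (hle : ∀ x, |u x| ≤ 1) : InKa a u := by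
  refine ⟨hu, ha, le_antisymm (ciSup_le hle) ?_⟩
  simpa [supNorm, ha] using le_ciSup (f := fun x => |u x|) ⟨1, forall_mem_range.2 hle⟩ a

lemma abs (hu : InKa a u) : InKa a fun x => |u x| :=
  of_abs_le_one hu.1.abs (by simp [hu.2.1]) fun x => by simpa using hu.abs_le_one x

lemma eventually_add_const_mul (hu : InKa a u) (hf : IsH1 f) (hfc : HasCompactSupport f)
    (hfs : tsupport f ⊆ {x | |u x| < 1}) : ∀ᶠ t in 𝓝 (0 : ℝ), InKa a fun x => u x + t * f x := by
  have hfa : f a = 0 := image_eq_zero_of_notMem_tsupport fun ha => by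
    simpa [hu.2.1] using hfs ha
  have hle : ∀ᶠ t in 𝓝 (0 : ℝ), ∀ x ∈ tsupport f, |u x + t * f x| < 1 := by
    refine hfc.isCompact.eventually_forall_of_forall_eventually fun x hx => ?_
    have hcont : Continuous fun p : ℝ × ℝ => |u p.2 + p.1 * f p.2| :=
      ((hu.1.1.comp continuous_snd).add
        (continuous_fst.mul (hf.1.comp continuous_snd))).abs
    exact hcont.continuousAt.eventually_lt continuousAt_const (by simpa using hfs hx)
  filter_upwards [hle] with t ht
  refine of_abs_le_one (hu.1.add_const_mul hf t) (by simp [hfa, hu.2.1]) fun x => ?_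
  by_cases hx : x ∈ tsupport f
  · exact (ht x hx).le
  · simpa [image_eq_zero_of_notMem_tsupport hx] using hu.abs_le_one x

end InKa

/-- `u` minimizes `IV V` over the constraint set `K_a`. -/
def IsMinimizer (V : ℝ → ℝ) (a : ℝ) (u : ℝ → ℝ) : Prop :=
  InKa a u ∧ ∀ w, InKa a w → IV V u ≤ IV V w

namespace IsMinimizer

variable {V u f : ℝ → ℝ} {a : ℝ}

lemma abs (hV : IsLinftyAddL1 V) (hu : IsMinimizer V a u) : IsMinimizer V a fun x => |u x| :=
  ⟨hu.1.abs, fun w hw => (hV.IV_abs_le hu.1.1).trans (hu.2 w hw)⟩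

lemma polarIV_eq_zero (hV : IsLinftyAddL1 V) (hu : IsMinimizer V a u) (hf : IsH1 f)
    (hfc : HasCompactSupport f) (hfs : tsupport f ⊆ {x | |u x| < 1}) : polarIV V u f = 0 := by
  let φ : ℝ → ℝ := fun t => IV V u + 2 * t * polarIV V u f + t ^ 2 * IV V f
  have hmin : IsLocalMin φ 0 := by
    filter_upwards [hu.1.eventually_add_const_mul hf hfc hfs] with t ht
    simpa [φ, ← hV.IV_add_const_mul hu.1.1 hf t] using hu.2 _ ht
  have hφ : HasDerivAt φ (2 * polarIV V u f) 0 := by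
    have hlin :=
      (((hasDerivAt_id (0 : ℝ)).const_mul 2).mul_const (polarIV V u f)).const_add (IV V u)
    exact (hlin.add ((hasDerivAt_pow 2 0).mul_const (IV V f))).congr_deriv (by simp)
  simpa using hmin.hasDerivAt_eq_zero hφ

end IsMinimizer

section DuBoisReymond

variable {g ψ : ℝ → ℝ} {α β : ℝ}

lemma integral_eq_zero_of_notMem_Ioo (hψ : LocallyIntegrable ψ) (hsupp : ∀ x ∉ Ioc α β, ψ x = 0)
    (hmean : ∫ x in α..β, ψ x = 0) {x : ℝ} (hx : x ∉ Ioo α β) : ∫ t in α..x, ψ t = 0 := by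
  rcases le_or_gt x α with h | h
  · refine intervalIntegral.integral_zero_ae (.of_forall fun t ht => hsupp t fun h' => ?_)
    exact h'.1.not_ge (uIoc_of_ge h ▸ ht).2
  · have hβx : β ≤ x := not_lt.1 fun h' => hx ⟨h, h'⟩
    rw [← intervalIntegral.integral_add_adjacent_intervals
      (intervalIntegrable_of_locallyIntegrable hψ α β)
      (intervalIntegrable_of_locallyIntegrable hψ β x),
      hmean, zero_add]
    refine intervalIntegral.integral_zero_ae (.of_forall fun t ht => hsupp t fun h' => ?_)
    exact h'.2.not_gt (uIoc_of_le hβx ▸ ht).1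

lemma isH1_integral (hψ : MemLp ψ 2) (hsupp : ∀ x ∉ Ioc α β, ψ x = 0)
    (hmean : ∫ x in α..β, ψ x = 0) : IsH1 fun x => ∫ t in α..x, ψ t := by
  have hψl := hψ.locallyIntegrable one_le_two
  have hac := absolutelyContinuousOnInterval_integral hψl α
  have hderiv : deriv (fun x => ∫ t in α..x, ψ t) =ᵐ[volume] ψ :=
    deriv_eq_of_eq_const_add_integral hψl fun _ => (zero_add _).symm
  refine .of_absolutelyContinuous ?_ ((memLp_congr_ae hderiv).2 hψ) hac
  exact (continuous_of_absolutelyContinuous hac).memLp_of_hasCompactSupport <|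
    .intro isCompact_Icc fun x hx => integral_eq_zero_of_notMem_Ioo hψl hsupp hmean
      fun h => hx (Ioo_subset_Icc_self h)

lemma integral_mul_eq_zero_of_integral_mul_deriv_eq_zero
    (h : ∀ f, IsH1 f → tsupport f ⊆ Icc α β → ∫ x in α..β, g x * deriv f x = 0)
    (hψ : MemLp ψ 2) (hsupp : ∀ x ∉ Ioc α β, ψ x = 0) (hmean : ∫ x in α..β, ψ x = 0) :
    ∫ x in α..β, g x * ψ x = 0 := by
  have hψl := hψ.locallyIntegrable one_le_two
  have hderiv : deriv (fun x => ∫ t in α..x, ψ t) =ᵐ[volume] ψ :=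
    deriv_eq_of_eq_const_add_integral hψl fun _ => (zero_add _).symm
  rw [← h _ (isH1_integral hψ hsupp hmean) (closure_minimal (fun x hx => ?_) isClosed_Icc)]
  · refine intervalIntegral.integral_congr_ae ?_
    filter_upwards [hderiv] with x hx _
    rw [hx]
  · by_contra hx'
    exact hx (integral_eq_zero_of_notMem_Ioo hψl hsupp hmean fun h => hx' (Ioo_subset_Icc_self h))

-- Test against the primitive of `g` minus its mean value.
lemma ae_eq_const_of_integral_mul_deriv_eq_zero (hαβ : α ≤ β)
    (hg : MemLp g 2 (volume.restrict (Ioc α β)))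
    (h : ∀ f, IsH1 f → tsupport f ⊆ Icc α β → ∫ x in α..β, g x * deriv f x = 0) :
    ∃ m, ∀ᵐ x, x ∈ Ioc α β → g x = m := by
  let m := ⨍ x in Ioc α β, g x
  let ψ := (Ioc α β).indicator fun x => g x - m
  have hψ_eq {x : ℝ} (hx : x ∈ Ioc α β) : ψ x = g x - m := indicator_of_mem hx _
  have hψ : MemLp ψ 2 :=
    (memLp_indicator_iff_restrict measurableSet_Ioc).2 (hg.sub (memLp_const m))
  have hmean : ∫ x in α..β, ψ x = 0 := by
    rw [intervalIntegral.integral_of_le hαβ, setIntegral_congr_fun measurableSet_Ioc fun _ => hψ_eq]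
    exact integral_sub_average _ g
  have hii {f : ℝ → ℝ} (hf : Integrable f (volume.restrict (Ioc α β))) :
      IntervalIntegrable f volume α β := (intervalIntegrable_iff_integrableOn_Ioc_of_le hαβ).2 hf
  have hψr := hψ.restrict (Ioc α β)
  have hgψ : IntervalIntegrable (fun x => g x * ψ x) volume α β := hii (hg.integrable_mul hψr)
  have hsq : ∫ x in α..β, ψ x * ψ x = 0 := calc
    ∫ x in α..β, ψ x * ψ x = ∫ x in α..β, (g x * ψ x - m * ψ x) :=
      intervalIntegral.integral_congr_Ioo_of_le hαβ fun x hx => by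
        simp only [← sub_mul, ← hψ_eq (Ioo_subset_Ioc_self hx)]
    _ = 0 := by
      rw [intervalIntegral.integral_sub hgψ ((hii (hψr.integrable one_le_two)).const_mul m),
        intervalIntegral.integral_const_mul, hmean, mul_zero, sub_zero]
      exact integral_mul_eq_zero_of_integral_mul_deriv_eq_zero h hψ
        (fun x hx => indicator_of_notMem hx _) hmean
  rw [intervalIntegral.integral_eq_zero_iff_of_le_of_nonneg_ae hαβ
    (.of_forall fun x => mul_self_nonneg _) (hii (hψr.integrable_mul hψr))] at hsq
  refine ⟨m, (ae_restrict_iff' measurableSet_Ioc).1 ?_⟩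
  filter_upwards [hsq, ae_restrict_mem measurableSet_Ioc] with x hx hxI
  exact sub_eq_zero.1 (hψ_eq hxI ▸ mul_self_eq_zero.1 hx)

end DuBoisReymond

namespace IsMinimizer

variable {V u f : ℝ → ℝ} {a α β : ℝ}

lemma intervalIntegral_polarIV_eq_zero (hV : IsLinftyAddL1 V) (hu : IsMinimizer V a u)
    (hαβ : α ≤ β) (hsub : Icc α β ⊆ {x | |u x| < 1}) (hf : IsH1 f) (hfs : tsupport f ⊆ Icc α β) :
    ∫ x in α..β, (deriv u x * deriv f x + V x * (u x * f x)) = 0 := by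
  rw [← hu.polarIV_eq_zero hV hf (isCompact_Icc.of_isClosed_subset (isClosed_tsupport f) hfs)
    (hfs.trans hsub), polarIV, intervalIntegral.integral_of_le hαβ, ← integral_Icc_eq_integral_Ioc]
  refine setIntegral_eq_integral_of_forall_compl_eq_zero fun x hx => ?_
  have hxf : x ∉ tsupport f := fun h => hx (hfs h)
  rw [image_eq_zero_of_notMem_tsupport hxf,
    Function.notMem_support.1 fun h => hxf (support_deriv_subset h)]
  simp

-- The first variation of the energy, with the potential term integrated by parts.
lemma integral_mul_deriv_eq_zero (hV : IsLinftyAddL1 V) (hu : IsMinimizer V a u) (hαβ : α ≤ β)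
    (hsub : Icc α β ⊆ {x | |u x| < 1}) (hf : IsH1 f) (hfs : tsupport f ⊆ Icc α β) :
    ∫ x in α..β, (deriv u x - ∫ t in α..x, V t * u t) * deriv f x = 0 := by
  let W : ℝ → ℝ := fun x => ∫ t in α..x, V t * u t
  have hVu : LocallyIntegrable fun x => V x * u x := hV.locallyIntegrable.mul_continuous hu.1.1.1
  have hW : AbsolutelyContinuousOnInterval W α β :=
    absolutelyContinuousOnInterval_integral hVu α α β
  have hW' : deriv W =ᵐ[volume] fun x => V x * u x :=
    deriv_eq_of_eq_const_add_integral hVu fun _ => (zero_add _).symm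
  have hfsupp : Function.support f ⊆ Ioo α β := interior_Icc (a := α) (b := β) ▸
    interior_maximal ((subset_tsupport f).trans hfs) hf.1.isOpen_support
  have hfα : f α = 0 := Function.notMem_support.1 fun h => (hfsupp h).1.false
  have hfβ : f β = 0 := Function.notMem_support.1 fun h => (hfsupp h).2.false
  have hparts : ∫ x in α..β, W x * deriv f x = -∫ x in α..β, deriv W x * f x := by
    rw [hW.integral_mul_deriv_eq_deriv_mul (hf.absolutelyContinuousOnInterval α β), hfα, hfβ]
    simp
  have hWf : IntervalIntegrable (fun x => W x * deriv f x) volume α β :=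
    (intervalIntegrable_of_locallyIntegrable (hf.memLp_deriv.locallyIntegrable one_le_two)
      α β).continuousOn_mul hW.continuousOn
  have hWf' : IntervalIntegrable (fun x => deriv W x * f x) volume α β :=
    hW.intervalIntegrable_deriv.mul_continuousOn hf.1.continuousOn
  have huf : IntervalIntegrable (fun x => deriv u x * deriv f x) volume α β :=
    (hu.1.1.memLp_deriv.integrable_mul hf.memLp_deriv).intervalIntegrable
  have hpolar : ∫ x in α..β, (deriv u x * deriv f x + deriv W x * f x) = 0 := by
    rw [← hu.intervalIntegral_polarIV_eq_zero hV hαβ hsub hf hfs]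
    refine intervalIntegral.integral_congr_ae ?_
    filter_upwards [hW'] with x hx _
    rw [hx, mul_assoc]
  calc ∫ x in α..β, (deriv u x - W x) * deriv f x
    _ = (∫ x in α..β, deriv u x * deriv f x) - ∫ x in α..β, W x * deriv f x := by
      simp only [sub_mul, intervalIntegral.integral_sub huf hWf]
    _ = 0 := by rw [hparts, sub_neg_eq_add, ← intervalIntegral.integral_add huf hWf', hpolar]

lemma exists_hasDerivAt (hV : IsLinftyAddL1 V) (hu : IsMinimizer V a u) (hαβ : α ≤ β)
    (hsub : Icc α β ⊆ {x | |u x| < 1}) :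
    ∃ m, ∀ x ∈ Ioo α β, HasDerivAt u (m + ∫ t in α..x, V t * u t) x := by
  let W : ℝ → ℝ := fun x => ∫ t in α..x, V t * u t
  have hW : Continuous W := intervalIntegral.continuous_primitive
    (intervalIntegrable_of_locallyIntegrable (hV.locallyIntegrable.mul_continuous hu.1.1.1)) α
  have hW2 : MemLp W 2 (volume.restrict (Ioc α β)) := by
    obtain ⟨C, hC⟩ := isCompact_Icc.exists_bound_of_continuousOn hW.continuousOn
    exact .of_bound hW.aestronglyMeasurable C <|
      ae_restrict_of_forall_mem measurableSet_Ioc fun x hx => hC x (Ioc_subset_Icc_self hx)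
  obtain ⟨m, hm⟩ := ae_eq_const_of_integral_mul_deriv_eq_zero hαβ
    ((hu.1.1.memLp_deriv.restrict _).sub hW2)
    fun f hf hfs => hu.integral_mul_deriv_eq_zero hV hαβ hsub hf hfs
  have hprim {x : ℝ} (hx : x ∈ Ioo α β) : u x = u α + ∫ t in α..x, (m + W t) := by
    rw [hu.1.1.eq_add_integral_deriv α x]
    congr 1
    refine intervalIntegral.integral_congr_ae ?_
    filter_upwards [hm] with t ht htx
    rw [uIoc_of_le hx.1.le] at htx
    exact sub_eq_iff_eq_add.1 (ht ⟨htx.1, htx.2.trans hx.2.le⟩)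
  refine ⟨m, fun x hx => ?_⟩
  have hmW : Continuous fun y => m + W y := continuous_const.add hW
  exact ((hmW.integral_hasStrictDerivAt α x).hasDerivAt.const_add (u α)).congr_of_eventuallyEq <|
    eventually_of_mem (Ioo_mem_nhds hx.1 hx.2) fun _ => hprim

end IsMinimizer

/-- `u` is a `C¹` solution on `s` of `u'' = V u`, written in integrated form because `V` is only
locally integrable and `u''` need not exist pointwise. -/
structure SolvesOn (V u : ℝ → ℝ) (s : Set ℝ) : Prop where
  differentiableAt : ∀ x ∈ s, DifferentiableAt ℝ u x
  deriv_eq : ∀ x y, uIcc x y ⊆ s → deriv u y = deriv u x + ∫ t in x..y, V t * u t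

namespace SolvesOn

variable {V u : ℝ → ℝ} {s t : Set ℝ} {x a b : ℝ}

lemma mono (hu : SolvesOn V u s) (hts : t ⊆ s) : SolvesOn V u t :=
  ⟨fun x hx => hu.differentiableAt x (hts hx), fun x y hxy => hu.deriv_eq x y (hxy.trans hts)⟩

lemma comp_neg (hu : SolvesOn V u s) :
    SolvesOn (fun x => V (-x)) (fun x => u (-x)) (Neg.neg ⁻¹' s) := by
  refine ⟨fun x hx => (hu.differentiableAt (-x) hx).comp x differentiable_neg.differentiableAt,
    fun x y hxy => ?_⟩
  have h := hu.deriv_eq (-y) (-x)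
    (uIcc_comm (-y) (-x) ▸ image_neg_uIcc (a := x) (b := y) ▸ image_subset_iff.2 hxy)
  rw [intervalIntegral.integral_comp_neg (fun t => V t * u t), deriv_comp_neg, deriv_comp_neg, h]
  ring

lemma continuousOn (hu : SolvesOn V u s) : ContinuousOn u s := fun x hx =>
  (hu.differentiableAt x hx).continuousAt.continuousWithinAt

lemma intervalIntegrable_mul (hu : SolvesOn V u s) (hV : LocallyIntegrable V)
    (hab : uIcc a b ⊆ s) : IntervalIntegrable (fun t => V t * u t) volume a b :=
  (intervalIntegrable_of_locallyIntegrable hV a b).mul_continuousOn (hu.continuousOn.mono hab)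

lemma continuousOn_deriv (hu : SolvesOn V u s) (hV : LocallyIntegrable V) (hab : uIcc a b ⊆ s) :
    ContinuousOn (deriv u) (uIcc a b) :=
  ((intervalIntegral.continuousOn_primitive_interval' (hu.intervalIntegrable_mul hV hab)
    left_mem_uIcc).const_add (deriv u a)).congr fun x hx =>
      hu.deriv_eq a x ((uIcc_subset_uIcc left_mem_uIcc hx).trans hab)

lemma eq_add_integral_deriv (hu : SolvesOn V u s) (hV : LocallyIntegrable V) (hab : uIcc a b ⊆ s) :
    u b = u a + ∫ t in a..b, deriv u t := by
  rw [intervalIntegral.integral_deriv_eq_sub (fun x hx => hu.differentiableAt x (hab hx))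
    (hu.continuousOn_deriv hV hab).intervalIntegrable, add_sub_cancel]

lemma abs_deriv_le {M : ℝ} (hu : SolvesOn V u s) (hV : LocallyIntegrable V) (hab : uIcc a b ⊆ s)
    (ha : deriv u a = 0) (hM : ∀ t ∈ uIcc a b, |u t| ≤ M) :
    |deriv u b| ≤ |(∫ t in a..b, |V t|)| * M := by
  have hM₀ : 0 ≤ M := (abs_nonneg _).trans (hM a left_mem_uIcc)
  calc |deriv u b| = |∫ t in a..b, V t * u t| := by rw [hu.deriv_eq a b hab, ha, zero_add]
    _ ≤ |(∫ t in a..b, |V t| * M)| := by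
      rw [← Real.norm_eq_abs]
      refine intervalIntegral.norm_integral_le_abs_of_norm_le
        (ae_restrict_of_forall_mem measurableSet_uIoc fun t ht => ?_)
        ((intervalIntegrable_of_locallyIntegrable hV a b).abs.mul_const M)
      rw [norm_mul]
      exact mul_le_mul_of_nonneg_left (hM t (uIoc_subset_uIcc ht)) (norm_nonneg _)
    _ = |(∫ t in a..b, |V t|)| * M := by
      rw [intervalIntegral.integral_mul_const, abs_mul, abs_of_nonneg hM₀]

-- On a ball around `x` of radius at most `1` on which `∫ |V| ≤ 1 / 2`, the maximum `M` of `|u|`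
-- satisfies `M ≤ M / 2`.
lemma eventually_eq_zero (hu : SolvesOn V u s) (hV : LocallyIntegrable V) (hs : s ∈ 𝓝 x)
    (h₀ : u x = 0) (h₁ : deriv u x = 0) : ∀ᶠ y in 𝓝 x, u y = 0 := by
  have hVcont : Continuous fun y => |(∫ t in x..y, |V t|)| :=
    (intervalIntegral.continuous_primitive
      (fun a b => (intervalIntegrable_of_locallyIntegrable hV a b).abs) x).abs
  have hVsmall : ∀ᶠ y in 𝓝 x, |(∫ t in x..y, |V t|)| < 1 / 2 :=
    hVcont.continuousAt.eventually_lt continuousAt_const (by simp)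
  obtain ⟨r, hr, hball⟩ := Metric.nhds_basis_closedBall.mem_iff.1
    (inter_mem (inter_mem hs hVsmall) (Metric.closedBall_mem_nhds x one_pos))
  let K := Metric.closedBall x r
  have hK : Convex ℝ K := convex_closedBall x r
  have hx : x ∈ K := Metric.mem_closedBall_self hr.le
  have huIcc {y : ℝ} (hy : y ∈ K) : uIcc x y ⊆ K := hK.ordConnected.uIcc_subset hx hy
  have hKs : K ⊆ s := fun y hy => (hball hy).1.1
  obtain ⟨z, hz, hmax⟩ := (isCompact_closedBall x r).exists_isMaxOn ⟨x, hx⟩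
    (hu.continuousOn.mono hKs).abs
  have hderiv {y : ℝ} (hy : y ∈ K) : |deriv u y| ≤ 1 / 2 * |u z| :=
    (hu.abs_deriv_le hV ((huIcc hy).trans hKs) h₁ fun t ht => hmax (huIcc hy ht)).trans <|
      mul_le_mul_of_nonneg_right (hball hy).1.2.le (abs_nonneg _)
  have hz₀ : |u z| ≤ 1 / 2 * |u z| := calc
    |u z| = ‖u z - u x‖ := by rw [h₀, sub_zero, Real.norm_eq_abs]
    _ ≤ 1 / 2 * |u z| * ‖z - x‖ := hK.norm_image_sub_le_of_norm_deriv_le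
      (fun y hy => hu.differentiableAt y (hKs hy)) (fun y hy => hderiv hy) hx hz
    _ ≤ 1 / 2 * |u z| :=
      mul_le_of_le_one_right (by positivity) (mem_closedBall_iff_norm.1 (hball hz).2)
  filter_upwards [Metric.closedBall_mem_nhds x hr] with y hy
  exact abs_nonpos_iff.1 ((hmax hy).trans (by linarith))

end SolvesOn

namespace IsMinimizer

variable {V u : ℝ → ℝ} {a : ℝ}

lemma solvesOn (hV : IsLinftyAddL1 V) (hu : IsMinimizer V a u) :
    SolvesOn V u {x | |u x| < 1} := by
  have hVu : LocallyIntegrable fun x => V x * u x := hV.locallyIntegrable.mul_continuous hu.1.1.1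
  have hopen : IsOpen {x | |u x| < 1} := isOpen_lt hu.1.1.1.abs continuous_const
  have hlocal {x y : ℝ} (hxy : uIcc x y ⊆ {x | |u x| < 1}) :
      DifferentiableAt ℝ u x ∧ deriv u y = deriv u x + ∫ t in x..y, V t * u t := by
    obtain ⟨α, β, hsub, hαβ⟩ := exists_uIcc_subset_Ioo_Icc_subset hopen hxy
    have hx : x ∈ Ioo α β := hsub left_mem_uIcc
    obtain ⟨m, hm⟩ := hu.exists_hasDerivAt hV (hx.1.trans hx.2).le hαβ
    refine ⟨(hm x hx).differentiableAt, ?_⟩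
    rw [(hm x hx).deriv, (hm y (hsub right_mem_uIcc)).deriv, add_assoc,
      intervalIntegral.integral_add_adjacent_intervals
        (intervalIntegrable_of_locallyIntegrable hVu α x)
        (intervalIntegrable_of_locallyIntegrable hVu x y)]
  exact ⟨fun x hx => (hlocal (y := x) (by simpa using hx)).1, fun x y hxy => (hlocal hxy).2⟩

lemma pos_of_nonneg (hV : IsLinftyAddL1 V) (hu : IsMinimizer V a u) (hnonneg : ∀ x, 0 ≤ u x)
    (x : ℝ) : 0 < u x := by
  have hopen : IsOpen {x | u x = 0} := isOpen_iff_mem_nhds.2 fun x (hx : u x = 0) => by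
    have hmin : IsLocalMin u x := .of_forall fun y => hx ▸ hnonneg y
    refine (hu.solvesOn hV).eventually_eq_zero hV.locallyIntegrable ?_ hx hmin.deriv_eq_zero
    exact (isOpen_lt hu.1.1.1.abs continuous_const).mem_nhds (by simp [hx])
  have hempty : {x | u x = 0} = ∅ :=
    (isClopen_iff.1 ⟨isClosed_eq hu.1.1.1 continuous_const, hopen⟩).resolve_right fun h => by
      simpa [hu.1.2.1] using h.symm.subset (mem_univ a)
  exact (hnonneg x).lt_of_ne fun h => hempty.subset (h.symm : u x = 0)

lemma pos (hV : IsLinftyAddL1 V) (hu : IsMinimizer V a u) (x : ℝ) : 0 < u x := by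
  by_contra! hx
  obtain ⟨y, hy⟩ := intermediate_value_univ x a hu.1.1.1 ⟨hx, hu.1.2.1 ▸ zero_le_one⟩
  simpa [hy] using (hu.abs hV).pos_of_nonneg hV (fun _ => abs_nonneg _) y

end IsMinimizer

namespace SolvesOn

variable {V V₀ V₁ u : ℝ → ℝ} {R C c : ℝ}

-- `∫ V₀ u = [u'] - ∫ V₁ u`, and `u'` is bounded along a sequence tending to infinity.
lemma integrableOn_Ioi_mul (hu : SolvesOn (fun x => V₀ x + V₁ x) u (Ici R))
    (hV₀ : LocallyIntegrable V₀) (hV₀u : ∀ᵐ x, R ≤ x → 0 ≤ V₀ x * u x) (hV₁ : Integrable V₁)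
    (huC : ∀ x, R ≤ x → |u x| ≤ C) : IntegrableOn (fun x => V₀ x * u x) (Ioi R) := by
  have hsub {X : ℝ} (hX : R ≤ X) : uIcc R X ⊆ Ici R := uIcc_of_le hX ▸ Icc_subset_Ici_self
  have hV₁u : IntegrableOn (fun x => V₁ x * u x) (Ioi R) := hV₁.integrableOn.mul_bdd
    ((hu.continuousOn.mono Ioi_subset_Ici_self).aestronglyMeasurable measurableSet_Ioi)
    (ae_restrict_of_forall_mem measurableSet_Ioi fun x hx => huC x (mem_Ioi.1 hx).le)
  have hii₀ (X) (hX : R ≤ X) : IntervalIntegrable (fun x => V₀ x * u x) volume R X :=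
    (intervalIntegrable_of_locallyIntegrable hV₀ R X).mul_continuousOn
      (hu.continuousOn.mono (hsub hX))
  refine integrableOn_Ioi_of_frequently_integral_norm_le
    (B := 2 * C + |deriv u R| + ∫ x in Ioi R, |V₁ x * u x|) hii₀ ?_
  refine ((frequently_abs_deriv_le hu.differentiableAt huC).and_eventually
    (eventually_ge_atTop R)).mono fun X ⟨hX, hRX⟩ => ?_
  have hii₁ : IntervalIntegrable (fun x => V₁ x * u x) volume R X :=
    (intervalIntegrable_iff_integrableOn_Ioc_of_le hRX).2 (hV₁u.mono_set Ioc_subset_Ioi_self)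
  have hnorm : ∫ x in R..X, ‖V₀ x * u x‖ = ∫ x in R..X, V₀ x * u x := by
    refine intervalIntegral.integral_congr_ae ?_
    filter_upwards [hV₀u] with x hx hxX
    exact Real.norm_of_nonneg (hx (uIoc_of_le hRX ▸ hxX).1.le)
  have hsol : deriv u X - deriv u R = (∫ x in R..X, V₀ x * u x) + ∫ x in R..X, V₁ x * u x := by
    rw [← intervalIntegral.integral_add (hii₀ X hRX) hii₁, hu.deriv_eq R X (hsub hRX),
      add_sub_cancel_left]
    simp only [add_mul]
  have hV₁X : |∫ x in R..X, V₁ x * u x| ≤ ∫ x in Ioi R, |V₁ x * u x| :=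
    (intervalIntegral.abs_integral_le_integral_abs hRX).trans
      (intervalIntegral_abs_le_integral_Ioi hV₁u hRX)
  linarith [hX, le_abs_self (deriv u X), neg_abs_le (deriv u R),
    neg_abs_le (∫ x in R..X, V₁ x * u x)]

lemma integrableOn_Ioi (hu : SolvesOn (fun x => V₀ x + V₁ x) u (Ici R))
    (hV₀ : LocallyIntegrable V₀) (hc : 0 < c) (hcV₀ : ∀ᵐ x, c ≤ V₀ x) (hV₁ : Integrable V₁)
    (hu₀ : ∀ x, R ≤ x → 0 ≤ u x) (huC : ∀ x, R ≤ x → |u x| ≤ C) : IntegrableOn u (Ioi R) := by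
  have hle : ∀ᵐ x, R ≤ x → c * u x ≤ V₀ x * u x := by
    filter_upwards [hcV₀] with x hx hRx using mul_le_mul_of_nonneg_right hx (hu₀ x hRx)
  have hV₀u : IntegrableOn (fun x => V₀ x * u x) (Ioi R) := by
    refine hu.integrableOn_Ioi_mul hV₀ ?_ hV₁ huC
    filter_upwards [hle] with x hx hRx using (mul_nonneg hc.le (hu₀ x hRx)).trans (hx hRx)
  refine (integrable_const_mul_iff hc.ne'.isUnit u).1 (Integrable.mono hV₀u ?_ ?_)
  · exact ((hu.continuousOn.mono Ioi_subset_Ici_self).aestronglyMeasurable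
      measurableSet_Ioi).const_mul c
  · filter_upwards [ae_restrict_of_ae hle, ae_restrict_mem measurableSet_Ioi] with x hx hRx
    exact abs_le_abs_of_nonneg (mul_nonneg hc.le (hu₀ x hRx.le)) (hx hRx.le)

-- `q = u' + u` solves `q' = q + (V u - u)`.
lemma integrableOn_Ioi_deriv (hu : SolvesOn V u (Ici R)) (hV : LocallyIntegrable V)
    (huC : ∀ x, R ≤ x → |u x| ≤ C) (hint : IntegrableOn u (Ioi R))
    (hVu : IntegrableOn (fun x => V x * u x) (Ioi R)) : IntegrableOn (deriv u) (Ioi R) := by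
  have hsub {X : ℝ} (hX : R ≤ X) : uIcc R X ⊆ Ici R := uIcc_of_le hX ▸ Icc_subset_Ici_self
  have hu'ii {X : ℝ} (hX : R ≤ X) : IntervalIntegrable (deriv u) volume R X :=
    (hu.continuousOn_deriv hV (hsub hX)).intervalIntegrable
  have hq : IntegrableOn (fun x => deriv u x + u x) (Ioi R) := by
    refine integrableOn_Ioi_of_eq_integral_self_add (C := 2 * C + C)
      (fun X hX => (hu'ii hX).add (hu.continuousOn.mono (hsub hX)).intervalIntegrable)
      (hVu.sub hint) (fun X hX => ?_) ?_
    · rw [hu.deriv_eq R X (hsub hX), hu.eq_add_integral_deriv hV (hsub hX), add_add_add_comm,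
        ← intervalIntegral.integral_add (hu.intervalIntegrable_mul hV (hsub hX)) (hu'ii hX)]
      congr 2 with x
      simp only [Pi.sub_apply]
      ring
    · refine ((frequently_abs_deriv_le hu.differentiableAt huC).and_eventually
        (eventually_ge_atTop R)).mono fun X ⟨hX, hRX⟩ => ?_
      exact (abs_add_le _ _).trans (add_le_add hX (huC X hRX))
  exact (integrable_add_iff_integrable_left' hint).1 hq

end SolvesOn

namespace IsMinimizer

variable {V V₀ V₁ u : ℝ → ℝ} {a c : ℝ}

lemma exists_solvesOn_Ici (hV : IsLinftyAddL1 V) (hu : IsMinimizer V a u) :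
    ∃ R, SolvesOn V u (Ici R) ∧ SolvesOn (fun x => V (-x)) (fun x => u (-x)) (Ici R) := by
  have hsmall : ∀ᶠ x in cocompact ℝ, |u x| < 1 :=
    hu.1.1.tendsto_cocompact.abs.eventually_lt_const (by simp)
  rw [cocompact_eq_atBot_atTop, eventually_sup] at hsmall
  obtain ⟨R, hR⟩ := eventually_atTop.1
    ((tendsto_neg_atTop_atBot.eventually hsmall.1).and hsmall.2)
  have hsol := hu.solvesOn hV
  exact ⟨R, hsol.mono fun x hx => (hR x hx).2, hsol.comp_neg.mono fun x hx => (hR x hx).1⟩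

lemma integrable (hV₀ : MemLp V₀ ⊤) (hc : 0 < c) (hcV₀ : ∀ᵐ x, c ≤ V₀ x) (hV₁ : Integrable V₁)
    (hu : IsMinimizer (fun x => V₀ x + V₁ x) a u) : Integrable u := by
  have hV : IsLinftyAddL1 fun x => V₀ x + V₁ x := ⟨V₀, V₁, hV₀, hV₁, rfl⟩
  have hV₀l := hV₀.locallyIntegrable le_top
  obtain ⟨R, hright, hleft⟩ := hu.exists_solvesOn_Ici hV
  have hneg := Measure.measurePreserving_neg (volume : Measure ℝ)
  refine integrable_of_integrableOn_Ioi_of_comp_neg hu.1.1.1.locallyIntegrable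
    (hright.integrableOn_Ioi hV₀l hc hcV₀ hV₁ (fun x _ => (hu.pos hV x).le)
      fun x _ => hu.1.abs_le_one x)
    (hleft.integrableOn_Ioi (V₀ := fun x => V₀ (-x)) (V₁ := fun x => V₁ (-x))
      ((hV₀.comp_measurePreserving hneg).locallyIntegrable le_top) hc
      (hneg.quasiMeasurePreserving.ae hcV₀) hV₁.comp_neg (fun x _ => (hu.pos hV (-x)).le)
      fun x _ => hu.1.abs_le_one (-x))

lemma integrable_deriv (hV : IsLinftyAddL1 V) (hu : IsMinimizer V a u)
    (hint : Integrable u) : Integrable (deriv u) := by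
  obtain ⟨R, hright, hleft⟩ := hu.exists_solvesOn_Ici hV
  have hVu := hV.integrable_mul hint hu.1.abs_le_one
  refine integrable_of_integrableOn_Ioi_of_comp_neg
    (hu.1.1.memLp_deriv.locallyIntegrable one_le_two)
    (hright.integrableOn_Ioi_deriv hV.locallyIntegrable (fun x _ => hu.1.abs_le_one x)
      hint.integrableOn hVu.integrableOn) ?_
  have hneg := hleft.integrableOn_Ioi_deriv hV.comp_neg.locallyIntegrable
    (fun x _ => hu.1.abs_le_one (-x)) hint.comp_neg.integrableOn hVu.comp_neg.integrableOn
  have hderiv : (deriv fun x => u (-x)) = -fun x => deriv u (-x) :=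
    funext fun x => deriv_comp_neg u x
  exact integrableOn_neg_iff.1 (hderiv ▸ hneg)

end IsMinimizer

/-- **Positivity and interior regularity of the minimizer.** Let `V = V₀ + V₁` with
`V₀ ∈ L^∞(ℝ)`, `ess inf V₀ > 0`, `V₁ ∈ L¹(ℝ)`, and let `u_a ∈ K_a` minimize `I(·;V)` over
`K_a`.  Then `u_a > 0` on `ℝ`, and on the open set `J = { x ; u_a(x) < 1 }` we have
`u_a ∈ W^{2,1}(J)` with `u_a'' = V u_a` a.e. on `J`: there are `v, w ∈ L¹(J)` such that
`u_a ∈ L¹(J)`, `u_a` is a primitive of `v` and `v` a primitive of `w` on every interval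
contained in `J`, and `w = V·u_a` a.e. on `J`. -/
theorem minimizer_positive_and_W21 (V₀ : ℝ → ℝ) (hV₀ : MemLp V₀ ⊤ (volume : Measure ℝ))
    (hpos : 0 < essInf V₀ (volume : Measure ℝ))
    (V₁ : ℝ → ℝ) (hV₁ : Integrable V₁ (volume : Measure ℝ))
    (a : ℝ) (ua : ℝ → ℝ) (hua : InKa a ua)
    (hmin : ∀ u : ℝ → ℝ, InKa a u →
      IV (fun x => V₀ x + V₁ x) ua ≤ IV (fun x => V₀ x + V₁ x) u) :
    (∀ x : ℝ, 0 < ua x) ∧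
      ∃ v w : ℝ → ℝ,
        IntegrableOn ua {x : ℝ | ua x < 1} (volume : Measure ℝ) ∧
        IntegrableOn v {x : ℝ | ua x < 1} (volume : Measure ℝ) ∧
        IntegrableOn w {x : ℝ | ua x < 1} (volume : Measure ℝ) ∧
        (∀ x y : ℝ, x ∈ {x : ℝ | ua x < 1} → y ∈ {x : ℝ | ua x < 1} →
          Set.uIcc x y ⊆ {x : ℝ | ua x < 1} →
            ua y = ua x + ∫ t in x..y, v t ∧ v y = v x + ∫ t in x..y, w t) ∧
        (∀ᵐ x : ℝ, x ∈ {x : ℝ | ua x < 1} → w x = (V₀ x + V₁ x) * ua x) := by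
  have hV : IsLinftyAddL1 fun x => V₀ x + V₁ x := ⟨V₀, V₁, hV₀, hV₁, rfl⟩
  have hu : IsMinimizer (fun x => V₀ x + V₁ x) a ua := ⟨hua, hmin⟩
  have hua_int : Integrable ua := hu.integrable hV₀ hpos (ae_essInf_le_of_memLp_top hV₀) hV₁
  have hsol : SolvesOn (fun x => V₀ x + V₁ x) ua {x | ua x < 1} :=
    (hu.solvesOn hV).mono fun x hx => (abs_of_pos (hu.pos hV x)).trans_lt hx
  exact ⟨hu.pos hV, deriv ua, fun x => (V₀ x + V₁ x) * ua x, hua_int.integrableOn,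
    (hu.integrable_deriv hV hua_int).integrableOn,
    (hV.integrable_mul hua_int hua.abs_le_one).integrableOn,
    fun x y _ _ hxy => ⟨hua.1.eq_add_integral_deriv x y, hsol.deriv_eq x y hxy⟩,
    .of_forall fun _ _ => rfl⟩
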